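/- arXiv:2602.12671 — 10 statements merged into one kernel-verified Lean document; each statement's English description precedes it below -/
import Mathlib

section
/- Let (C, Δ₋₁, Δ₀, Δ₁, α) be a Hom-tridendriform coalgebra over a field of characteristic 0 and let β : C → C be an endomorphism of it, i.e. a linear map satisfying β∘α = α∘β and Δᵢ∘β = (β⊗β)∘Δᵢ for i = −1, 0, 1. Then (C, Δ₋₁∘β, Δ₀∘β, Δ₁∘β, β∘α) is again a Hom-tridendriform coalgebra. -/
open TensorProduct

noncomputable section

variable {F : Type*} [Field F] [CharZero F]
variable {C : Type*} [AddCommGroup C] [Module F C]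

/-- The flip `τ : x ⊗ y ↦ y ⊗ x` on `C ⊗ C`. -/
def tw : C ⊗[F] C →ₗ[F] C ⊗[F] C := (TensorProduct.comm F C C).toLinearMap

/-- `(f ⊗ g)` (followed by the associator), for `f : C → C ⊗ C`, `g : C → C`. -/
def rT (f : C →ₗ[F] C ⊗[F] C) (g : C →ₗ[F] C) :
    C ⊗[F] C →ₗ[F] C ⊗[F] (C ⊗[F] C) :=
  (TensorProduct.assoc F C C C).toLinearMap ∘ₗ TensorProduct.map f g

/-- `(g ⊗ f)` for `g : C → C`, `f : C → C ⊗ C`. -/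
def lT (g : C →ₗ[F] C) (f : C →ₗ[F] C ⊗[F] C) :
    C ⊗[F] C →ₗ[F] C ⊗[F] (C ⊗[F] C) :=
  TensorProduct.map g f

/-- `τ ⊗ I` acting on `C ⊗ (C ⊗ C)` (swap of the first two factors). -/
def sw12 : C ⊗[F] (C ⊗[F] C) →ₗ[F] C ⊗[F] (C ⊗[F] C) :=
  (TensorProduct.assoc F C C C).toLinearMap ∘ₗ
    TensorProduct.map (tw : C ⊗[F] C →ₗ[F] C ⊗[F] C) (LinearMap.id : C →ₗ[F] C) ∘ₗ
    (TensorProduct.assoc F C C C).symm.toLinearMap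

/-- The cyclic permutation `ξ : x ⊗ y ⊗ z ↦ y ⊗ z ⊗ x` on `C ⊗ (C ⊗ C)`. -/
def cyc : C ⊗[F] (C ⊗[F] C) →ₗ[F] C ⊗[F] (C ⊗[F] C) :=
  TensorProduct.map (LinearMap.id : C →ₗ[F] C) (tw : C ⊗[F] C →ₗ[F] C ⊗[F] C) ∘ₗ sw12

/-- Hom-tridendriform coalgebra axioms for `(C, Δ₋₁, Δ₀, Δ₁, α)`. -/
def IsHomTridendriformCoalgebra (Δm Δ0 Δp : C →ₗ[F] C ⊗[F] C) (α : C →ₗ[F] C) : Prop :=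
  (rT Δm α ∘ₗ Δm = lT α (Δm + Δ0 + Δp) ∘ₗ Δm) ∧
  (rT Δp α ∘ₗ Δm = lT α Δm ∘ₗ Δp) ∧
  (lT α Δp ∘ₗ Δp = rT (Δm + Δ0 + Δp) α ∘ₗ Δp) ∧
  (rT Δm α ∘ₗ Δ0 = lT α Δp ∘ₗ Δ0) ∧
  (rT Δp α ∘ₗ Δ0 = lT α Δ0 ∘ₗ Δp) ∧
  (rT Δ0 α ∘ₗ Δm = lT α Δm ∘ₗ Δ0) ∧
  (rT Δ0 α ∘ₗ Δ0 = lT α Δ0 ∘ₗ Δ0)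

theorem rT_twist (f g : C →ₗ[F] C ⊗[F] C) (α β : C →ₗ[F] C) (hβα : β ∘ₗ α = α ∘ₗ β)
    (hg : g ∘ₗ β = TensorProduct.map β β ∘ₗ g) :
    rT (f ∘ₗ β) (β ∘ₗ α) ∘ₗ (g ∘ₗ β) = (rT f α ∘ₗ g) ∘ₗ (β ∘ₗ β) := by
  have h1 : rT (f ∘ₗ β) (β ∘ₗ α) = rT f α ∘ₗ TensorProduct.map β β := by
    rw [hβα, rT, rT, TensorProduct.map_comp, LinearMap.comp_assoc]
  ext x
  have h2 := LinearMap.congr_fun hg (β x)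
  simp only [LinearMap.comp_apply] at h2 ⊢
  rw [h1, LinearMap.comp_apply, ← h2]

theorem lT_twist (f g : C →ₗ[F] C ⊗[F] C) (α β : C →ₗ[F] C) (hβα : β ∘ₗ α = α ∘ₗ β)
    (hg : g ∘ₗ β = TensorProduct.map β β ∘ₗ g) :
    lT (β ∘ₗ α) (f ∘ₗ β) ∘ₗ (g ∘ₗ β) = (lT α f ∘ₗ g) ∘ₗ (β ∘ₗ β) := by
  have h1 : lT (β ∘ₗ α) (f ∘ₗ β) = lT α f ∘ₗ TensorProduct.map β β := by
    rw [hβα, lT, lT, TensorProduct.map_comp]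
  ext x
  have h2 := LinearMap.congr_fun hg (β x)
  simp only [LinearMap.comp_apply] at h2 ⊢
  rw [h1, LinearMap.comp_apply, ← h2]

/-- Twisting a Hom-tridendriform coalgebra by one of its endomorphisms. -/
theorem homTridendriformCoalgebra_twist
    (Δm Δ0 Δp : C →ₗ[F] C ⊗[F] C) (α β : C →ₗ[F] C)
    (h : IsHomTridendriformCoalgebra Δm Δ0 Δp α)
    (hβα : β ∘ₗ α = α ∘ₗ β)
    (hβm : Δm ∘ₗ β = TensorProduct.map β β ∘ₗ Δm)
    (hβ0 : Δ0 ∘ₗ β = TensorProduct.map β β ∘ₗ Δ0)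
    (hβp : Δp ∘ₗ β = TensorProduct.map β β ∘ₗ Δp) :
    IsHomTridendriformCoalgebra (Δm ∘ₗ β) (Δ0 ∘ₗ β) (Δp ∘ₗ β) (β ∘ₗ α) := by
  obtain ⟨h1, h2, h3, h4, h5, h6, h7⟩ := h
  have T : ∀ g : C →ₗ[F] C ⊗[F] C, g ∘ₗ β = TensorProduct.map β β ∘ₗ g →
      ∀ f, rT (f ∘ₗ β) (β ∘ₗ α) ∘ₗ (g ∘ₗ β) = (rT f α ∘ₗ g) ∘ₗ (β ∘ₗ β) :=
    fun g hg f => rT_twist f g α β hβα hg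
  have L : ∀ g : C →ₗ[F] C ⊗[F] C, g ∘ₗ β = TensorProduct.map β β ∘ₗ g →
      ∀ f, lT (β ∘ₗ α) (f ∘ₗ β) ∘ₗ (g ∘ₗ β) = (lT α f ∘ₗ g) ∘ₗ (β ∘ₗ β) :=
    fun g hg f => lT_twist f g α β hβα hg
  unfold IsHomTridendriformCoalgebra
  simp only [← LinearMap.add_comp]
  refine ⟨?_, ?_, ?_, ?_, ?_, ?_, ?_⟩
  · rw [T _ hβm, L _ hβm, h1]
  · rw [T _ hβm, L _ hβp, h2]
  · rw [T _ hβp, L _ hβp, h3]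
  · rw [T _ hβ0, L _ hβ0, h4]
  · rw [T _ hβ0, L _ hβp, h5]
  · rw [T _ hβm, L _ hβ0, h6]
  · rw [T _ hβ0, L _ hβ0, h7]
end
end

section
/- Let (C, Δ₋₁, Δ₀, Δ₁, α) be a multiplicative Hom-tridendriform coalgebra over a field of characteristic 0 such that α is invertible. Then (C, Δ₋₁∘α⁻¹, Δ₀∘α⁻¹, Δ₁∘α⁻¹, id_C) is a tridendriform coalgebra, i.e. a Hom-tridendriform coalgebra whose structure map is the identity. -/
open TensorProduct

noncomputable section

variable {F : Type*} [Field F] [CharZero F]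
variable {C : Type*} [AddCommGroup C] [Module F C]

theorem untw_mult (g : C →ₗ[F] C ⊗[F] C) (α α' : C →ₗ[F] C)
    (hg : g ∘ₗ α = TensorProduct.map α α ∘ₗ g)
    (h1 : α ∘ₗ α' = LinearMap.id) (h2 : α' ∘ₗ α = LinearMap.id) :
    TensorProduct.map α' α' ∘ₗ g = g ∘ₗ α' := by
  calc TensorProduct.map α' α' ∘ₗ g
      = TensorProduct.map α' α' ∘ₗ (g ∘ₗ α) ∘ₗ α' := by
        rw [LinearMap.comp_assoc, h1, LinearMap.comp_id]
    _ = (TensorProduct.map α' α' ∘ₗ TensorProduct.map α α) ∘ₗ g ∘ₗ α' := by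
        rw [hg]; simp only [LinearMap.comp_assoc]
    _ = g ∘ₗ α' := by
        rw [← TensorProduct.map_comp, h2, TensorProduct.map_id, LinearMap.id_comp]

theorem untw_rT (f g : C →ₗ[F] C ⊗[F] C) (α α' : C →ₗ[F] C)
    (hg : TensorProduct.map α' α' ∘ₗ g = g ∘ₗ α')
    (h1 : α ∘ₗ α' = LinearMap.id) :
    rT (f ∘ₗ α') LinearMap.id ∘ₗ (g ∘ₗ α') = (rT f α ∘ₗ g) ∘ₗ α' ∘ₗ α' := by
  unfold rT
  rw [← h1, TensorProduct.map_comp]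
  simp only [LinearMap.comp_assoc]
  rw [← LinearMap.comp_assoc _ g (TensorProduct.map α' α'), hg, LinearMap.comp_assoc]

theorem untw_lT (f g : C →ₗ[F] C ⊗[F] C) (α α' : C →ₗ[F] C)
    (hg : TensorProduct.map α' α' ∘ₗ g = g ∘ₗ α')
    (h1 : α ∘ₗ α' = LinearMap.id) :
    lT LinearMap.id (f ∘ₗ α') ∘ₗ (g ∘ₗ α') = (lT α f ∘ₗ g) ∘ₗ α' ∘ₗ α' := by
  unfold lT
  rw [← h1, TensorProduct.map_comp]
  simp only [LinearMap.comp_assoc]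
  rw [← LinearMap.comp_assoc _ g (TensorProduct.map α' α'), hg, LinearMap.comp_assoc]

/-- Untwisting a multiplicative Hom-tridendriform coalgebra with invertible structure
map yields a tridendriform coalgebra (structure map the identity). -/
theorem homTridendriformCoalgebra_untwist
    (Δm Δ0 Δp : C →ₗ[F] C ⊗[F] C) (α : C →ₗ[F] C)
    (h : IsHomTridendriformCoalgebra Δm Δ0 Δp α)
    (hmultm : Δm ∘ₗ α = TensorProduct.map α α ∘ₗ Δm)
    (hmult0 : Δ0 ∘ₗ α = TensorProduct.map α α ∘ₗ Δ0)
    (hmultp : Δp ∘ₗ α = TensorProduct.map α α ∘ₗ Δp)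
    (α' : C →ₗ[F] C) (hαα' : α ∘ₗ α' = LinearMap.id) (hα'α : α' ∘ₗ α = LinearMap.id) :
    IsHomTridendriformCoalgebra (Δm ∘ₗ α') (Δ0 ∘ₗ α') (Δp ∘ₗ α')
      (LinearMap.id : C →ₗ[F] C) := by
  have em := untw_mult Δm α α' hmultm hαα' hα'α
  have e0 := untw_mult Δ0 α α' hmult0 hαα' hα'α
  have ep := untw_mult Δp α α' hmultp hαα' hα'α
  obtain ⟨a1, a2, a3, a4, a5, a6, a7⟩ := h
  unfold IsHomTridendriformCoalgebra
  simp only [← LinearMap.add_comp]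
  simp only [untw_rT _ Δm α α' em hαα', untw_rT _ Δ0 α α' e0 hαα', untw_rT _ Δp α α' ep hαα',
    untw_lT _ Δm α α' em hαα', untw_lT _ Δ0 α α' e0 hαα', untw_lT _ Δp α α' ep hαα']
  rw [a1, a2, a3, a4, a5, a6, a7]
  exact ⟨rfl, rfl, rfl, rfl, rfl, rfl, rfl⟩
end
end

section
/- Let (C, Δ₋₁, Δ₀, Δ₁, α) be a Hom-tridendriform coalgebra over a field of characteristic 0 and define the comultiplication Δ : C → C⊗C by Δ = Δ₋₁ + Δ₀ + Δ₁. Then (C, Δ, α) isit a Hom-coassociative coalgebra, i.e. (α⊗Δ)∘Δ = (Δ⊗α)∘Δ. -/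
open TensorProduct

noncomputable section

variable {F : Type*} [Field F] [CharZero F]
variable {C : Type*} [AddCommGroup C] [Module F C]

/-- Hom-coassociative coalgebra axiom `(α ⊗ Δ) ∘ Δ = (Δ ⊗ α) ∘ Δ`. -/
def IsHomCoassociativeCoalgebra (Δ : C →ₗ[F] C ⊗[F] C) (α : C →ₗ[F] C) : Prop :=
  lT α Δ ∘ₗ Δ = rT Δ α ∘ₗ Δ

/-- The sum of the three cooperations of a Hom-tridendriform coalgebra is
Hom-coassociative. -/
theorem homTridendriformCoalgebra_sum_homCoassociative
    (Δm Δ0 Δp : C →ₗ[F] C ⊗[F] C) (α : C →ₗ[F] C)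
    (h : IsHomTridendriformCoalgebra Δm Δ0 Δp α) :
    IsHomCoassociativeCoalgebra (Δm + Δ0 + Δp) α := by
  obtain ⟨h1, h2, h3, h4, h5, h6, h7⟩ := h
  unfold IsHomCoassociativeCoalgebra
  have hl : ∀ f g : C →ₗ[F] C ⊗[F] C, lT α (f + g) = lT α f + lT α g := fun f g => by
    simp only [lT, TensorProduct.map_add_right]
  have hr : ∀ f g : C →ₗ[F] C ⊗[F] C, rT (f + g) α = rT f α + rT g α := fun f g => by
    simp only [rT, TensorProduct.map_add_left, LinearMap.comp_add]
  simp only [hl, hr, LinearMap.comp_add, LinearMap.add_comp] at *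
  rw [h3, h2, h4, h5, h6, h7, h1, ← h2, ← h5, ← h4, ← h6, ← h7]
  abel
end
end

section
/- Let (C, Δ₀, α, R) be a Hom-coassociative Rota-Baxter coalgebra of weight λ over a field of characteristic 0. Define Δ₋₁ = (I⊗R)∘Δ₀, Δ₁ = (R⊗I)∘Δ₀ and Δ̄₀ = λΔ₀. Then (C, Δ₋₁, Δ̄₀, Δ₁, α) is a Hom-tridendriform coalgebra. -/
open TensorProduct

noncomputable section

variable {F : Type*} [Field F] [CharZero F]
variable {C : Type*} [AddCommGroup C] [Module F C]

/-- Rota-Baxter axioms of weight `lam` on a Hom-coassociative coalgebra `(C, Δ0, α)`. -/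
def IsHomCoassociativeRotaBaxter (Δ0 : C →ₗ[F] C ⊗[F] C) (α R : C →ₗ[F] C) (lam : F) : Prop :=
  (lT α Δ0 ∘ₗ Δ0 = rT Δ0 α ∘ₗ Δ0) ∧
  (R ∘ₗ α = α ∘ₗ R) ∧
  (TensorProduct.map R R ∘ₗ Δ0 =
    (TensorProduct.map R (LinearMap.id : C →ₗ[F] C) ∘ₗ Δ0 +
     TensorProduct.map (LinearMap.id : C →ₗ[F] C) R ∘ₗ Δ0 + lam • Δ0) ∘ₗ R)

theorem rT_key (D : C →ₗ[F] C ⊗[F] C) (α f g k : C →ₗ[F] C) :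
    rT (TensorProduct.map f g ∘ₗ D) (k ∘ₗ α) =
      TensorProduct.map f (TensorProduct.map g k) ∘ₗ rT D α := by
  unfold rT
  rw [TensorProduct.map_comp, ← LinearMap.comp_assoc, ← LinearMap.comp_assoc]
  congr 1
  ext x y z
  simp

theorem lT_key (D : C →ₗ[F] C ⊗[F] C) (α f g k : C →ₗ[F] C) :
    lT (f ∘ₗ α) (TensorProduct.map g k ∘ₗ D) =
      TensorProduct.map f (TensorProduct.map g k) ∘ₗ lT α D := by
  unfold lT
  rw [TensorProduct.map_comp]

theorem rT_map (D : C →ₗ[F] C ⊗[F] C) (α g k : C →ₗ[F] C) (E : C →ₗ[F] C ⊗[F] C) :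
    rT D α ∘ₗ (TensorProduct.map g k ∘ₗ E) = rT (D ∘ₗ g) (α ∘ₗ k) ∘ₗ E := by
  unfold rT
  rw [TensorProduct.map_comp]; rfl

theorem lT_map (D : C →ₗ[F] C ⊗[F] C) (α g k : C →ₗ[F] C) (E : C →ₗ[F] C ⊗[F] C) :
    lT α D ∘ₗ (TensorProduct.map g k ∘ₗ E) = lT (α ∘ₗ g) (D ∘ₗ k) ∘ₗ E := by
  unfold lT
  rw [TensorProduct.map_comp]; rfl

theorem rT_smul (D : C →ₗ[F] C ⊗[F] C) (α : C →ₗ[F] C) (c : F) :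
    rT (c • D) α = c • rT D α := by
  unfold rT
  rw [TensorProduct.map_smul_left, LinearMap.comp_smul]

theorem lT_smul (D : C →ₗ[F] C ⊗[F] C) (α : C →ₗ[F] C) (c : F) :
    lT α (c • D) = c • lT α D := by
  unfold lT
  rw [TensorProduct.map_smul_right]

/-- A Hom-coassociative Rota-Baxter coalgebra of weight `lam` gives rise to a
Hom-tridendriform coalgebra. -/
theorem rotaBaxter_homTridendriformCoalgebra
    (Δ0 : C →ₗ[F] C ⊗[F] C) (α R : C →ₗ[F] C) (lam : F)
    (h : IsHomCoassociativeRotaBaxter Δ0 α R lam) :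
    IsHomTridendriformCoalgebra
      (TensorProduct.map (LinearMap.id : C →ₗ[F] C) R ∘ₗ Δ0)
      (lam • Δ0)
      (TensorProduct.map R (LinearMap.id : C →ₗ[F] C) ∘ₗ Δ0) α := by
  obtain ⟨hco, hR, hRB⟩ := h
  have key : ∀ f g k : C →ₗ[F] C,
      rT (TensorProduct.map f g ∘ₗ Δ0) (k ∘ₗ α) ∘ₗ Δ0 =
        lT (f ∘ₗ α) (TensorProduct.map g k ∘ₗ Δ0) ∘ₗ Δ0 := by
    intro f g k
    rw [rT_key, lT_key, LinearMap.comp_assoc, LinearMap.comp_assoc, hco]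
  have h1 := key LinearMap.id R R
  have h2 := key R LinearMap.id R
  have h3 := key R R LinearMap.id
  have h4 := key LinearMap.id R LinearMap.id
  have h5 := key R LinearMap.id LinearMap.id
  have h6 := key LinearMap.id LinearMap.id R
  simp only [LinearMap.id_comp, TensorProduct.map_id] at h1 h2 h3 h4 h5 h6
  rw [hRB] at h1 h3
  refine ⟨?_, ?_, ?_, ?_, ?_, ?_, ?_⟩
  · rw [rT_map, lT_map, LinearMap.comp_id, LinearMap.comp_id, ← hR, h1]
    congr 3
    abel
  · rw [rT_map, lT_map, LinearMap.comp_id, LinearMap.comp_id, ← hR, h2]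
  · rw [rT_map, lT_map, LinearMap.comp_id, LinearMap.comp_id, ← hR, ← h3]
    congr 3
    abel
  · rw [LinearMap.comp_smul, LinearMap.comp_smul, h4]
  · rw [lT_map, LinearMap.comp_id, ← hR, lT_smul, LinearMap.comp_smul, LinearMap.smul_comp, h5]
  · rw [rT_map, LinearMap.comp_id, ← hR, rT_smul, LinearMap.comp_smul,
      LinearMap.smul_comp, h6]
  · rw [rT_smul, lT_smul, LinearMap.comp_smul, LinearMap.comp_smul, LinearMap.smul_comp,
      LinearMap.smul_comp, hco]
end
end

section
/- Let (C, Δ₋₁, Δ₁, α) be a Hom-dendriform coalgebra over a field of characteristic 0 and define the linear map Δ = Δ₁ − τ∘Δ₋₁ : C → C⊗C, where τ is the flip of C⊗C. Then (C, Δ, α) is a Hom-preLie coalgebra. -/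
open TensorProduct

noncomputable section

variable {F : Type*} [Field F] [CharZero F]
variable {C : Type*} [AddCommGroup C] [Module F C]

/-- Hom-dendriform coalgebra axioms for `(C, Δ₋₁, Δ₁, α)`. -/
def IsHomDendriformCoalgebra (Δm Δp : C →ₗ[F] C ⊗[F] C) (α : C →ₗ[F] C) : Prop :=
  (rT Δm α ∘ₗ Δm = lT α (Δm + Δp) ∘ₗ Δm) ∧
  (rT Δp α ∘ₗ Δm = lT α Δm ∘ₗ Δp) ∧
  (lT α Δp ∘ₗ Δp = rT (Δm + Δp) α ∘ₗ Δp)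

/-- Hom-preLie coalgebra axiom for `(C, Δ, α)`. -/
def IsHomPreLieCoalgebra (Δ : C →ₗ[F] C ⊗[F] C) (α : C →ₗ[F] C) : Prop :=
  rT Δ α ∘ₗ Δ - lT α Δ ∘ₗ Δ = sw12 ∘ₗ (rT Δ α ∘ₗ Δ - lT α Δ ∘ₗ Δ)

def s23 : C ⊗[F] (C ⊗[F] C) →ₗ[F] C ⊗[F] (C ⊗[F] C) :=
  TensorProduct.map (LinearMap.id : C →ₗ[F] C) (tw : C ⊗[F] C →ₗ[F] C ⊗[F] C)

lemma sw12_tmul (x y z : C) : sw12 (F := F) (x ⊗ₜ[F] (y ⊗ₜ[F] z)) = y ⊗ₜ (x ⊗ₜ z) := by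
  simp [sw12, tw]

lemma s23_tmul (x y z : C) : s23 (F := F) (x ⊗ₜ[F] (y ⊗ₜ[F] z)) = x ⊗ₜ (z ⊗ₜ y) := by
  simp [s23, tw]

lemma cyc_tmul (x y z : C) : cyc (F := F) (x ⊗ₜ[F] (y ⊗ₜ[F] z)) = y ⊗ₜ (z ⊗ₜ x) := by
  simp [cyc, sw12_tmul, tw]

lemma sw12_sw12 (t : C ⊗[F] (C ⊗[F] C)) : sw12 (sw12 t) = t := by
  have : sw12 ∘ₗ sw12 = (LinearMap.id : C ⊗[F] (C ⊗[F] C) →ₗ[F] _) := by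
    ext x y z; simp [sw12_tmul]
  exact LinearMap.congr_fun this t

lemma sw12_cyc_cyc (t : C ⊗[F] (C ⊗[F] C)) : sw12 (cyc (cyc t)) = s23 t := by
  have : sw12 ∘ₗ cyc ∘ₗ cyc = (s23 : C ⊗[F] (C ⊗[F] C) →ₗ[F] _) := by
    ext x y z; simp [sw12_tmul, cyc_tmul, s23_tmul]
  exact LinearMap.congr_fun this t

lemma cyc_s23 (t : C ⊗[F] (C ⊗[F] C)) : cyc (s23 t) = sw12 (cyc t) := by
  have : cyc ∘ₗ s23 = (sw12 ∘ₗ cyc : C ⊗[F] (C ⊗[F] C) →ₗ[F] _) := by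
    ext x y z; simp [sw12_tmul, cyc_tmul, s23_tmul]
  exact LinearMap.congr_fun this t

lemma cyc_cyc_sw12 (t : C ⊗[F] (C ⊗[F] C)) : cyc (cyc (sw12 t)) = sw12 (cyc t) := by
  have : cyc ∘ₗ cyc ∘ₗ sw12 = (sw12 ∘ₗ cyc : C ⊗[F] (C ⊗[F] C) →ₗ[F] _) := by
    ext x y z; simp [sw12_tmul, cyc_tmul]
  exact LinearMap.congr_fun this t

lemma rT_tw_left (f : C →ₗ[F] C ⊗[F] C) (α : C →ₗ[F] C) (t : C ⊗[F] C) :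
    rT (tw ∘ₗ f) α t = sw12 (rT f α t) := by
  induction t with
  | zero => simp
  | add a b ha hb => simp only [map_add, ha, hb]
  | tmul x y => simp [rT, sw12]

lemma lT_tw_left (f : C →ₗ[F] C ⊗[F] C) (α : C →ₗ[F] C) (t : C ⊗[F] C) :
    lT α (tw ∘ₗ f) t = s23 (lT α f t) := by
  induction t with
  | zero => simp
  | add a b ha hb => simp only [map_add, ha, hb]
  | tmul x y => simp [lT, s23]

lemma rT_tw (f : C →ₗ[F] C ⊗[F] C) (α : C →ₗ[F] C) (t : C ⊗[F] C) :
    rT f α (tw t) = cyc (lT α f t) := by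
  induction t with
  | zero => simp
  | add a b ha hb => simp only [map_add, ha, hb]
  | tmul x y =>
    simp only [rT, lT, tw, LinearMap.comp_apply, LinearEquiv.coe_coe, TensorProduct.comm_tmul,
      TensorProduct.map_tmul]
    induction f y with
    | zero => simp
    | add a b ha hb => simp only [map_add, ha, hb, TensorProduct.add_tmul, TensorProduct.tmul_add]
    | tmul a b => simp [cyc_tmul]

lemma lT_tw (f : C →ₗ[F] C ⊗[F] C) (α : C →ₗ[F] C) (t : C ⊗[F] C) :
    lT α f (tw t) = cyc (cyc (rT f α t)) := by
  induction t with
  | zero => simp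
  | add a b ha hb => simp only [map_add, ha, hb]
  | tmul x y =>
    simp only [rT, lT, tw, LinearMap.comp_apply, LinearEquiv.coe_coe, TensorProduct.comm_tmul,
      TensorProduct.map_tmul]
    induction f x with
    | zero => simp
    | add a b ha hb => simp only [map_add, ha, hb, TensorProduct.add_tmul, TensorProduct.tmul_add]
    | tmul a b => simp [cyc_tmul]

lemma rT_add (f g : C →ₗ[F] C ⊗[F] C) (α : C →ₗ[F] C) (t : C ⊗[F] C) :
    rT (f + g) α t = rT f α t + rT g α t := by
  simp [rT, TensorProduct.map_add_left]

lemma lT_add (f g : C →ₗ[F] C ⊗[F] C) (α : C →ₗ[F] C) (t : C ⊗[F] C) :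
    lT α (f + g) t = lT α f t + lT α g t := by
  simp [lT, TensorProduct.map_add_right]

lemma rT_sub (f g : C →ₗ[F] C ⊗[F] C) (α : C →ₗ[F] C) (t : C ⊗[F] C) :
    rT (f - g) α t = rT f α t - rT g α t := by
  rw [eq_sub_iff_add_eq, ← rT_add, sub_add_cancel]

lemma lT_sub (f g : C →ₗ[F] C ⊗[F] C) (α : C →ₗ[F] C) (t : C ⊗[F] C) :
    lT α (f - g) t = lT α f t - lT α g t := by
  rw [eq_sub_iff_add_eq, ← lT_add, sub_add_cancel]

/-- A Hom-dendriform coalgebra gives a Hom-preLie coalgebra via `Δ = Δ₁ - τ ∘ Δ₋₁`. -/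
theorem homDendriform_homPreLieCoalgebra
    (Δm Δp : C →ₗ[F] C ⊗[F] C) (α : C →ₗ[F] C)
    (h : IsHomDendriformCoalgebra Δm Δp α) :
    IsHomPreLieCoalgebra (Δp - tw ∘ₗ Δm) α := by
  obtain ⟨h1, h2, h3⟩ := h
  refine LinearMap.ext fun x => ?_
  have e1 := LinearMap.congr_fun h1 x
  have e2 := LinearMap.congr_fun h2 x
  have e3 := LinearMap.congr_fun h3 x
  simp only [LinearMap.comp_apply, lT_add, rT_add] at e1 e2 e3
  have e4 := sw12_cyc_cyc (lT α Δm (Δp x))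
  have e5 : sw12 (s23 (lT α Δm (Δp x))) = cyc (cyc (lT α Δm (Δp x))) := by
    rw [← e4, sw12_sw12]
  simp only [LinearMap.comp_apply, LinearMap.sub_apply, map_sub, map_add, rT_sub, lT_sub,
    rT_tw_left, lT_tw_left, rT_tw, lT_tw, e1, e2, e3, cyc_s23, cyc_cyc_sw12, sw12_sw12, e4, e5]
  abel
end
end

section
/- Let (C, Δ₀, α, R) be a Hom-coassociative Rota-Baxter coalgebra of weight −1 over a field of characteristic 0. Define Δ = (R⊗I)∘Δ₀ − τ∘(I⊗R)∘Δ₀ − Δ₀, where τ is the flip of C⊗C and I the identity. Then (C, Δ, α) is a Hom-preLie coalgebra. -/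
open TensorProduct

noncomputable section

variable {F : Type*} [Field F] [CharZero F]
variable {C : Type*} [AddCommGroup C] [Module F C]

theorem aux_preLie {D : Type*} [AddCommGroup D] (μ : D →+ D →+ D) (a r : D →+ D)
    (has : ∀ f g h, μ (a f) (μ g h) = μ (μ f g) (a h))
    (hc : ∀ f, r (a f) = a (r f))
    (hrb : ∀ f g, μ (r f) (r g) = r (μ (r f) g) + r (μ f (r g)) - r (μ f g))
    (s : D → D → D) (hs : ∀ f g, s f g = μ (r f) g - μ g (r f) - μ f g) (f g h : D) :
    s (s f g) (a h) - s (a f) (s g h) = s (s g f) (a h) - s (a g) (s f h) := by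
  have e1 : r (s f g) - r (s g f) = μ (r f) (r g) - μ (r g) (r f) := by
    simp only [hs, hrb, map_sub]
    abel
  have e2 : r (s f g) = r (s g f) + μ (r f) (r g) - μ (r g) (r f) := by
    rw [add_sub_assoc, ← e1]; abel
  rw [hs (s f g), hs (s g f), e2]
  simp only [hs, hc, map_sub, map_add, AddMonoidHom.sub_apply, AddMonoidHom.add_apply, has]
  simp only [← has]
  abel

/-- Convolution of functionals. -/
def cv (Φ : C →ₗ[F] C ⊗[F] C) (f g : C →ₗ[F] F) : C →ₗ[F] F :=
  LinearMap.mul' F F ∘ₗ TensorProduct.map f g ∘ₗ Φ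

/-- Evaluation at three functionals. -/
def ev3 (f g h : C →ₗ[F] F) : C ⊗[F] (C ⊗[F] C) →ₗ[F] F :=
  LinearMap.mul' F F ∘ₗ TensorProduct.map f (LinearMap.mul' F F ∘ₗ TensorProduct.map g h)

theorem ev3_sep (s t : C ⊗[F] (C ⊗[F] C)) (hst : ∀ f g h, ev3 f g h s = ev3 f g h t) :
    s = t := by
  let b := Module.Basis.ofVectorSpace F C
  apply (b.tensorProduct (b.tensorProduct b)).repr.injective
  ext ⟨i, j, k⟩
  have key : ∀ u, (b.tensorProduct (b.tensorProduct b)).repr u (i, j, k)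
      = ev3 (b.coord i) (b.coord j) (b.coord k) u := by
    intro u
    have : (b.tensorProduct (b.tensorProduct b)).coord (i, j, k)
      = ev3 (b.coord i) (b.coord j) (b.coord k) := by
      ext x y z
      simp [ev3]
      ring
    exact LinearMap.congr_fun this u
  rw [key, key, hst]

theorem ev3_lT (f g h : C →ₗ[F] F) (α : C →ₗ[F] C) (Φ Ψ : C →ₗ[F] C ⊗[F] C) (c : C) :
    ev3 f g h (lT α Φ (Ψ c)) = cv Ψ (f ∘ₗ α) (cv Φ g h) c := by
  simp only [cv, LinearMap.comp_apply]
  generalize Ψ c = t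
  induction t with
  | zero => simp
  | add x y hx hy => simp only [map_add, hx, hy]
  | tmul x y => simp [ev3, lT]

theorem ev3_rT (f g h : C →ₗ[F] F) (α : C →ₗ[F] C) (Φ Ψ : C →ₗ[F] C ⊗[F] C) (c : C) :
    ev3 f g h (rT Φ α (Ψ c)) = cv Ψ (cv Φ f g) (h ∘ₗ α) c := by
  simp only [cv, LinearMap.comp_apply]
  generalize Ψ c = t
  induction t with
  | zero => simp
  | add x y hx hy => simp only [map_add, hx, hy]
  | tmul x y =>
    simp only [rT, LinearMap.comp_apply, TensorProduct.map_tmul]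
    generalize Φ x = u
    induction u with
    | zero => simp
    | add p q hp hq => simp only [map_add, TensorProduct.add_tmul, hp, hq, add_mul,
        LinearMap.mul'_apply] at *
    | tmul p q => simp [ev3, mul_assoc]

theorem ev3_sw12 (f g h : C →ₗ[F] F) (t : C ⊗[F] (C ⊗[F] C)) :
    ev3 f g h (sw12 t) = ev3 g f h t := by
  have : ev3 f g h ∘ₗ sw12 = ev3 g f h := by
    ext x y z
    simp [ev3, sw12, tw, mul_left_comm]
  exact LinearMap.congr_fun this t

/-- Convolution as a biadditive map. -/
def cvHom (Φ : C →ₗ[F] C ⊗[F] C) : (C →ₗ[F] F) →+ (C →ₗ[F] F) →+ (C →ₗ[F] F) :=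
  AddMonoidHom.mk' (fun f => AddMonoidHom.mk' (fun g => cv Φ f g) (by
      intro a b; simp [cv, TensorProduct.map_add_right, LinearMap.add_comp, LinearMap.comp_add]))
    (by intro a b; ext g; simp [cv, TensorProduct.map_add_left])

/-- Precomposition as an additive map. -/
def pre (T : C →ₗ[F] C) : (C →ₗ[F] F) →+ (C →ₗ[F] F) :=
  AddMonoidHom.mk' (fun f => f ∘ₗ T) (by intro a b; rfl)

theorem cv_map (Φ : C →ₗ[F] C ⊗[F] C) (S T : C →ₗ[F] C) (f g : C →ₗ[F] F) :
    cv (TensorProduct.map S T ∘ₗ Φ) f g = cv Φ (f ∘ₗ S) (g ∘ₗ T) := by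
  simp only [cv, TensorProduct.map_comp, LinearMap.comp_assoc]

theorem cv_tw (Φ : C →ₗ[F] C ⊗[F] C) (f g : C →ₗ[F] F) :
    cv (tw ∘ₗ Φ) f g = cv Φ g f := by
  have : LinearMap.mul' F F ∘ₗ TensorProduct.map f g ∘ₗ tw
      = LinearMap.mul' F F ∘ₗ TensorProduct.map g f := by
    ext x y
    simp [tw, mul_comm]
  ext c
  exact LinearMap.congr_fun this (Φ c)

/-- A Hom-coassociative Rota-Baxter coalgebra of weight `-1` gives a Hom-preLie
coalgebra via `Δ = (R ⊗ I) ∘ Δ₀ - τ ∘ (I ⊗ R) ∘ Δ₀ - Δ₀`. -/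
theorem rotaBaxterWeightNegOne_homPreLieCoalgebra
    (Δ0 : C →ₗ[F] C ⊗[F] C) (α R : C →ₗ[F] C)
    (h : IsHomCoassociativeRotaBaxter Δ0 α R (-1 : F)) :
    IsHomPreLieCoalgebra
      (TensorProduct.map R (LinearMap.id : C →ₗ[F] C) ∘ₗ Δ0 -
        tw ∘ₗ (TensorProduct.map (LinearMap.id : C →ₗ[F] C) R ∘ₗ Δ0) - Δ0) α := by
  obtain ⟨h1, h2, h3⟩ := h
  set Δ := TensorProduct.map R (LinearMap.id : C →ₗ[F] C) ∘ₗ Δ0 -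
        tw ∘ₗ (TensorProduct.map (LinearMap.id : C →ₗ[F] C) R ∘ₗ Δ0) - Δ0 with hΔ
  have main := aux_preLie (cvHom Δ0) (pre α) (pre R)
    (by
      intro f g h
      ext c
      have := congrArg (ev3 f g h) (LinearMap.congr_fun h1 c)
      rw [LinearMap.comp_apply, LinearMap.comp_apply, ev3_lT, ev3_rT] at this
      exact this)
    (by
      intro f
      change (f ∘ₗ α) ∘ₗ R = (f ∘ₗ R) ∘ₗ α
      rw [LinearMap.comp_assoc, LinearMap.comp_assoc, h2])
    (by
      intro f g
      change cv Δ0 (f ∘ₗ R) (g ∘ₗ R) = cv Δ0 (f ∘ₗ R) g ∘ₗ R + cv Δ0 f (g ∘ₗ R) ∘ₗ R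
        - cv Δ0 f g ∘ₗ R
      have e1 := cv_map Δ0 R LinearMap.id f g
      have e2 := cv_map Δ0 LinearMap.id R f g
      rw [LinearMap.comp_id] at e1 e2
      rw [← cv_map, h3, ← e1, ← e2]
      ext c
      simp [cv, sub_eq_add_neg])
    (cv Δ)
    (by
      intro f g
      change cv Δ f g = cv Δ0 (f ∘ₗ R) g - cv Δ0 g (f ∘ₗ R) - cv Δ0 f g
      have e1 := cv_map Δ0 R LinearMap.id f g
      have e2 := cv_map Δ0 LinearMap.id R g f
      rw [LinearMap.comp_id] at e1 e2
      rw [← e1, ← e2, ← cv_tw (_ ∘ₗ Δ0) f g, hΔ]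
      ext c
      simp [cv])
  unfold IsHomPreLieCoalgebra
  apply LinearMap.ext
  intro c
  apply ev3_sep
  intro f g h
  rw [LinearMap.comp_apply sw12, ev3_sw12]
  simp only [LinearMap.sub_apply, LinearMap.comp_apply, map_sub, ev3_lT, ev3_rT]
  exact LinearMap.congr_fun (main f g h) c
end
end

section
/- Let (M, Δ₋₁ᴹ, Δ₀ᴹ, Δ₁ᴹ, α_M) be a Hom-tridendriform comodule over a multiplicative Hom-tridendriform coalgebra (C, Δ₋₁, Δ₀, Δ₁, α). For any natural number n define the linear maps Δᵢᴹ⁽ⁿ⁾ = (αⁿ⊗Id_M)∘Δᵢᴹ : M → C⊗M for i = −1, 0, 1. Then (M, Δ₋₁ᴹ⁽ⁿ⁾, Δ₀ᴹ⁽ⁿ⁾, Δ₁ᴹ⁽ⁿ⁾, α_M) is again a Hom-tridendriform comodule over (C, Δ₋₁, Δ₀, Δ₁, α). -/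
open TensorProduct

noncomputable section

variable {F : Type*} [Field F] [CharZero F]
variable {C : Type*} [AddCommGroup C] [Module F C]

variable {M : Type*} [AddCommGroup M] [Module F M]

/-- `(f ⊗ g)` (followed by the associator) for `f : C → C ⊗ C`, `g : M → M`. -/
def rTM (f : C →ₗ[F] C ⊗[F] C) (g : M →ₗ[F] M) :
    C ⊗[F] M →ₗ[F] C ⊗[F] (C ⊗[F] M) :=
  (TensorProduct.assoc F C C M).toLinearMap ∘ₗ TensorProduct.map f g

/-- `(g ⊗ f)` for `g : C → C`, `f : M → C ⊗ M`. -/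
def lTM (g : C →ₗ[F] C) (f : M →ₗ[F] C ⊗[F] M) :
    C ⊗[F] M →ₗ[F] C ⊗[F] (C ⊗[F] M) :=
  TensorProduct.map g f

/-- `τ ⊗ Id_M` acting on `C ⊗ (C ⊗ M)` (swap of the two `C`-factors). -/
def sw12M : C ⊗[F] (C ⊗[F] M) →ₗ[F] C ⊗[F] (C ⊗[F] M) :=
  (TensorProduct.assoc F C C M).toLinearMap ∘ₗ
    TensorProduct.map (tw : C ⊗[F] C →ₗ[F] C ⊗[F] C) (LinearMap.id : M →ₗ[F] M) ∘ₗ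
    (TensorProduct.assoc F C C M).symm.toLinearMap

/-- Hom-tridendriform comodule axioms over the Hom-tridendriform coalgebra
`(C, Δ₋₁, Δ₀, Δ₁, α)`. -/
def IsHomTridendriformComodule (Δm Δ0 Δp : C →ₗ[F] C ⊗[F] C) (α : C →ₗ[F] C)
    (Dm D0 Dp : M →ₗ[F] C ⊗[F] M) (αM : M →ₗ[F] M) : Prop :=
  (rTM Δm αM ∘ₗ Dm = lTM α (Dm + D0 + Dp) ∘ₗ Dm) ∧
  (rTM Δp αM ∘ₗ Dm = lTM α Dm ∘ₗ Dp) ∧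
  (lTM α Dp ∘ₗ Dp = rTM (Δm + Δ0 + Δp) αM ∘ₗ Dp) ∧
  (rTM Δm αM ∘ₗ D0 = lTM α Dp ∘ₗ D0) ∧
  (rTM Δp αM ∘ₗ D0 = lTM α D0 ∘ₗ Dp) ∧
  (rTM Δ0 αM ∘ₗ Dm = lTM α Dm ∘ₗ D0) ∧
  (rTM Δ0 αM ∘ₗ D0 = lTM α D0 ∘ₗ D0)

theorem mult_pow_aux (f : C →ₗ[F] C ⊗[F] C) (α : C →ₗ[F] C)
    (hf : f ∘ₗ α = TensorProduct.map α α ∘ₗ f) (n : ℕ) :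
    f ∘ₗ (α ^ n) = TensorProduct.map (α ^ n) (α ^ n) ∘ₗ f := by
  induction n with
  | zero =>
    ext x
    simp [Module.End.one_eq_id]
  | succ k ih =>
    rw [pow_succ, Module.End.mul_eq_comp, ← LinearMap.comp_assoc, ih, LinearMap.comp_assoc, hf,
      TensorProduct.map_comp, LinearMap.comp_assoc]

theorem rTM_twist_aux (f : C →ₗ[F] C ⊗[F] C) (α : C →ₗ[F] C) (αM : M →ₗ[F] M)
    (D : M →ₗ[F] C ⊗[F] M)
    (hf : f ∘ₗ α = TensorProduct.map α α ∘ₗ f) (n : ℕ) :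
    rTM f αM ∘ₗ (TensorProduct.map (α ^ n) (LinearMap.id : M →ₗ[F] M) ∘ₗ D) =
      TensorProduct.map (α ^ n) (TensorProduct.map (α ^ n) (LinearMap.id : M →ₗ[F] M)) ∘ₗ
        (rTM f αM ∘ₗ D) := by
  rw [← LinearMap.comp_assoc, ← LinearMap.comp_assoc]
  congr 1
  unfold rTM
  rw [LinearMap.comp_assoc, ← TensorProduct.map_comp, mult_pow_aux f α hf n,
    ← LinearMap.comp_assoc, LinearMap.comp_id]
  have h : TensorProduct.map (TensorProduct.map (α ^ n) (α ^ n) ∘ₗ f) αM =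
      TensorProduct.map (TensorProduct.map (α ^ n) (α ^ n)) (LinearMap.id : M →ₗ[F] M) ∘ₗ
        TensorProduct.map f αM := by
    rw [← TensorProduct.map_comp, LinearMap.id_comp]
  rw [h, ← LinearMap.comp_assoc]
  congr 1
  ext x y z
  simp

theorem lTM_twist_aux (α : C →ₗ[F] C) (E D : M →ₗ[F] C ⊗[F] M) (n : ℕ) :
    lTM α (TensorProduct.map (α ^ n) (LinearMap.id : M →ₗ[F] M) ∘ₗ E) ∘ₗ
        (TensorProduct.map (α ^ n) (LinearMap.id : M →ₗ[F] M) ∘ₗ D) =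
      TensorProduct.map (α ^ n) (TensorProduct.map (α ^ n) (LinearMap.id : M →ₗ[F] M)) ∘ₗ
        (lTM α E ∘ₗ D) := by
  rw [← LinearMap.comp_assoc, ← LinearMap.comp_assoc]
  congr 1
  unfold lTM
  rw [← TensorProduct.map_comp, ← TensorProduct.map_comp, LinearMap.comp_id,
    ← Module.End.mul_eq_comp, ← Module.End.mul_eq_comp, ← pow_succ, ← pow_succ']

/-- Twisting the structure maps of a Hom-tridendriform comodule by `α^n ⊗ Id_M`
gives again a Hom-tridendriform comodule. -/
theorem homTridendriformComodule_twist_pow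
    (Δm Δ0 Δp : C →ₗ[F] C ⊗[F] C) (α : C →ₗ[F] C)
    (Dm D0 Dp : M →ₗ[F] C ⊗[F] M) (αM : M →ₗ[F] M)
    (hC : IsHomTridendriformCoalgebra Δm Δ0 Δp α)
    (hmultm : Δm ∘ₗ α = TensorProduct.map α α ∘ₗ Δm)
    (hmult0 : Δ0 ∘ₗ α = TensorProduct.map α α ∘ₗ Δ0)
    (hmultp : Δp ∘ₗ α = TensorProduct.map α α ∘ₗ Δp)
    (hM : IsHomTridendriformComodule Δm Δ0 Δp α Dm D0 Dp αM) (n : ℕ) :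
    IsHomTridendriformComodule Δm Δ0 Δp α
      (TensorProduct.map (α ^ n) (LinearMap.id : M →ₗ[F] M) ∘ₗ Dm)
      (TensorProduct.map (α ^ n) (LinearMap.id : M →ₗ[F] M) ∘ₗ D0)
      (TensorProduct.map (α ^ n) (LinearMap.id : M →ₗ[F] M) ∘ₗ Dp) αM := by
  have hs : (Δm + Δ0 + Δp) ∘ₗ α = TensorProduct.map α α ∘ₗ (Δm + Δ0 + Δp) := by
    simp only [LinearMap.add_comp, LinearMap.comp_add, hmultm, hmult0, hmultp]
  obtain ⟨h1, h2, h3, h4, h5, h6, h7⟩ := hM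
  refine ⟨?_, ?_, ?_, ?_, ?_, ?_, ?_⟩
  · rw [← LinearMap.comp_add, ← LinearMap.comp_add, rTM_twist_aux _ _ _ _ hmultm,
      lTM_twist_aux, h1]
  · rw [rTM_twist_aux _ _ _ _ hmultp, lTM_twist_aux, h2]
  · rw [rTM_twist_aux _ _ _ _ hs, lTM_twist_aux, h3]
  · rw [rTM_twist_aux _ _ _ _ hmultm, lTM_twist_aux, h4]
  · rw [rTM_twist_aux _ _ _ _ hmultp, lTM_twist_aux, h5]
  · rw [rTM_twist_aux _ _ _ _ hmult0, lTM_twist_aux, h6]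
  · rw [rTM_twist_aux _ _ _ _ hmult0, lTM_twist_aux, h7]
end
end

section
/- Let (L, γ, Δ, α) be a post-Hom-Lie coalgebra over a field of characteristic 0 and let β : L → L be an endomorphism of it, i.e. a linear map satisfying β∘α = α∘β, γ∘β = (β⊗β)∘γ and Δ∘β = (β⊗β)∘Δ. Then (L, γ∘β, Δ∘β, β∘α) is again a post-Hom-Lie coalgebra. -/
open TensorProduct

noncomputable section

variable {F : Type*} [Field F] [CharZero F]
variable {C : Type*} [AddCommGroup C] [Module F C]

/-- Hom-Lie coalgebra axioms for `(C, γ, α)`: skew-cocommutativity,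
comultiplicativity, and the Hom-co-Jacobi identity. -/
def IsHomLieCoalgebra (γ : C →ₗ[F] C ⊗[F] C) (α : C →ₗ[F] C) : Prop :=
  (γ = -(tw ∘ₗ γ)) ∧
  (γ ∘ₗ α = TensorProduct.map α α ∘ₗ γ) ∧
  ((LinearMap.id + cyc + cyc ∘ₗ cyc) ∘ₗ (lT α γ ∘ₗ γ) = 0)

/-- Post-Hom-Lie coalgebra axioms for `(C, γ, Δ, α)`. -/
def IsPostHomLieCoalgebra (γ Δ : C →ₗ[F] C ⊗[F] C) (α : C →ₗ[F] C) : Prop :=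
  IsHomLieCoalgebra γ α ∧
  (lT α γ ∘ₗ Δ - rT Δ α ∘ₗ γ - sw12 ∘ₗ (lT α Δ ∘ₗ γ) = 0) ∧
  (rT Δ α ∘ₗ Δ - lT α Δ ∘ₗ Δ - sw12 ∘ₗ (rT Δ α ∘ₗ Δ) +
    sw12 ∘ₗ (lT α Δ ∘ₗ Δ) + rT γ α ∘ₗ Δ = 0)

theorem aux_lT (f g : C →ₗ[F] C ⊗[F] C) (α β : C →ₗ[F] C)
    (hf : f ∘ₗ β = TensorProduct.map β β ∘ₗ f) :
    lT (β ∘ₗ α) (f ∘ₗ β) ∘ₗ (g ∘ₗ β) =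
      TensorProduct.map β (TensorProduct.map β β) ∘ₗ (lT α f ∘ₗ g) ∘ₗ β := by
  rw [hf]
  simp only [lT, TensorProduct.map_comp, LinearMap.comp_assoc]

theorem aux_assoc (β : C →ₗ[F] C) (x : (C ⊗[F] C) ⊗[F] C) :
    TensorProduct.assoc F C C C (TensorProduct.map (TensorProduct.map β β) β x) =
      TensorProduct.map β (TensorProduct.map β β) (TensorProduct.assoc F C C C x) := by
  have : (TensorProduct.assoc F C C C).toLinearMap ∘ₗ
      TensorProduct.map (TensorProduct.map β β) β =
      TensorProduct.map β (TensorProduct.map β β) ∘ₗ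
        (TensorProduct.assoc F C C C).toLinearMap := by
    apply TensorProduct.ext_threefold
    intro x y z
    simp
  exact LinearMap.congr_fun this x

theorem aux_rT (f g : C →ₗ[F] C ⊗[F] C) (α β : C →ₗ[F] C)
    (hf : f ∘ₗ β = TensorProduct.map β β ∘ₗ f) :
    rT (f ∘ₗ β) (β ∘ₗ α) ∘ₗ (g ∘ₗ β) =
      TensorProduct.map β (TensorProduct.map β β) ∘ₗ (rT f α ∘ₗ g) ∘ₗ β := by
  rw [hf]
  apply LinearMap.ext
  intro x
  simp only [rT, TensorProduct.map_comp, LinearMap.comp_apply, LinearEquiv.coe_coe, aux_assoc]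

theorem aux_sw (β : C →ₗ[F] C) (x : C ⊗[F] (C ⊗[F] C)) :
    sw12 (TensorProduct.map β (TensorProduct.map β β) x) =
      TensorProduct.map β (TensorProduct.map β β) (sw12 x) := by
  obtain ⟨y, rfl⟩ := (TensorProduct.assoc F C C C).surjective x
  have : (sw12 ∘ₗ TensorProduct.map β (TensorProduct.map β β)) ∘ₗ
        (TensorProduct.assoc F C C C).toLinearMap =
      (TensorProduct.map β (TensorProduct.map β β) ∘ₗ sw12) ∘ₗ
        (TensorProduct.assoc F C C C).toLinearMap := by
    apply TensorProduct.ext_threefold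
    intro x y z
    simp [sw12, tw]
  exact LinearMap.congr_fun this y

theorem aux_cyc (β : C →ₗ[F] C) (x : C ⊗[F] (C ⊗[F] C)) :
    cyc (TensorProduct.map β (TensorProduct.map β β) x) =
      TensorProduct.map β (TensorProduct.map β β) (cyc x) := by
  obtain ⟨y, rfl⟩ := (TensorProduct.assoc F C C C).surjective x
  have : (cyc ∘ₗ TensorProduct.map β (TensorProduct.map β β)) ∘ₗ
        (TensorProduct.assoc F C C C).toLinearMap =
      (TensorProduct.map β (TensorProduct.map β β) ∘ₗ cyc) ∘ₗ
        (TensorProduct.assoc F C C C).toLinearMap := by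
    apply TensorProduct.ext_threefold
    intro x y z
    simp [cyc, sw12, tw]
  exact LinearMap.congr_fun this y

/-- Twisting a post-Hom-Lie coalgebra by one of its endomorphisms. -/
theorem postHomLieCoalgebra_twist
    (γ Δ : C →ₗ[F] C ⊗[F] C) (α β : C →ₗ[F] C)
    (h : IsPostHomLieCoalgebra γ Δ α)
    (hβα : β ∘ₗ α = α ∘ₗ β)
    (hβγ : γ ∘ₗ β = TensorProduct.map β β ∘ₗ γ)
    (hβΔ : Δ ∘ₗ β = TensorProduct.map β β ∘ₗ Δ) :
    IsPostHomLieCoalgebra (γ ∘ₗ β) (Δ ∘ₗ β) (β ∘ₗ α) := by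
  obtain ⟨⟨h1, h2, h3⟩, h4, h5⟩ := h
  refine ⟨⟨?_, ?_, ?_⟩, ?_, ?_⟩
  · conv_lhs => rw [h1]
    rfl
  · calc (γ ∘ₗ β) ∘ₗ (β ∘ₗ α) = ((γ ∘ₗ β) ∘ₗ α) ∘ₗ β := by
          rw [hβα]; rfl
      _ = TensorProduct.map β β ∘ₗ (γ ∘ₗ α) ∘ₗ β := by rw [hβγ]; rfl
      _ = _ := by rw [h2, TensorProduct.map_comp]; rfl
  · rw [aux_lT γ γ α β hβγ]
    apply LinearMap.ext
    intro x
    have := congrArg (TensorProduct.map β (TensorProduct.map β β)) (LinearMap.congr_fun h3 (β x))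
    simpa only [LinearMap.comp_apply, LinearMap.add_apply, LinearMap.id_apply, aux_cyc, map_add,
      LinearMap.zero_apply, map_zero] using this
  · rw [aux_lT γ Δ α β hβγ, aux_rT Δ γ α β hβΔ, aux_lT Δ γ α β hβΔ]
    apply LinearMap.ext
    intro x
    have := congrArg (TensorProduct.map β (TensorProduct.map β β)) (LinearMap.congr_fun h4 (β x))
    simpa only [LinearMap.comp_apply, LinearMap.sub_apply, aux_sw, map_sub,
      LinearMap.zero_apply, map_zero] using this
  · rw [aux_lT Δ Δ α β hβΔ, aux_rT Δ Δ α β hβΔ, aux_rT γ Δ α β hβγ]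
    apply LinearMap.ext
    intro x
    have := congrArg (TensorProduct.map β (TensorProduct.map β β)) (LinearMap.congr_fun h5 (β x))
    simpa only [LinearMap.comp_apply, LinearMap.sub_apply, LinearMap.add_apply, aux_sw, map_sub,
      map_add, LinearMap.zero_apply, map_zero] using this
end
end

section
/- Let (C, γ, Δ, α) be a post-Hom-Lie coalgebra over a field of characteristic 0, set Δ̃ = Δ + (1/2)γ, and let γ̃ = (1 − τ)∘Δ̃ be the associated cocommutator, where τ is the flip of C⊗C. Then γ̃ satisfies the Hom-co-Jacobi identity (1 + ξ + ξ²)∘(α⊗γ̃)∘γ̃ = 0, where ξ is the cyclic permutation x⊗y⊗z ↦ y⊗z⊗x; that is, C is a Hom-Lie admissible coalgebra for the comultiplication Δ̃. -/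
open TensorProduct

noncomputable section

variable {F : Type*} [Field F] [CharZero F]
variable {C : Type*} [AddCommGroup C] [Module F C]

theorem aux_ccc (u : C ⊗[F] (C ⊗[F] C)) : cyc (cyc (cyc u)) = u := by
  have : (cyc ∘ₗ cyc ∘ₗ cyc : C ⊗[F] (C ⊗[F] C) →ₗ[F] _) = LinearMap.id := by
    ext a b c; simp [cyc, sw12, tw]
  exact LinearMap.congr_fun this u

theorem aux_ltw (f : C →ₗ[F] C ⊗[F] C) (α : C →ₗ[F] C) (u : C ⊗[F] C) :
    lT α (tw ∘ₗ f) u = cyc (sw12 (lT α f u)) := by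
  have key : ∀ (a : C) (v : C ⊗[F] C), a ⊗ₜ[F] tw v = cyc (sw12 (a ⊗ₜ[F] v)) := by
    intro a v
    induction v with
    | zero => simp
    | tmul x y => simp [cyc, sw12, tw]
    | add x y hx hy => simp only [map_add, tmul_add, hx, hy]
  induction u with
  | zero => simp
  | tmul x y => simp [lT, key]
  | add x y hx hy => simp only [map_add, hx, hy]

theorem aux_lflip (f : C →ₗ[F] C ⊗[F] C) (α : C →ₗ[F] C) (u : C ⊗[F] C) :
    lT α f (tw u) = cyc (cyc (rT f α u)) := by
  have key : ∀ (a : C) (v : C ⊗[F] C), a ⊗ₜ[F] v =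
      cyc (cyc ((TensorProduct.assoc F C C C) (v ⊗ₜ[F] a))) := by
    intro a v
    induction v with
    | zero => simp
    | tmul x y => simp [cyc, sw12, tw]
    | add x y hx hy => simp only [map_add, tmul_add, add_tmul, ← hx, ← hy]
  induction u with
  | zero => simp
  | tmul x y => simp [lT, rT, tw, key]
  | add x y hx hy => simp only [map_add, hx, hy]

theorem aux_rtw (f : C →ₗ[F] C ⊗[F] C) (α : C →ₗ[F] C) (u : C ⊗[F] C) :
    rT (tw ∘ₗ f) α u = sw12 (rT f α u) := by
  induction u with
  | zero => simp
  | tmul x y => simp [rT, sw12]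
  | add x y hx hy => simp only [map_add, hx, hy]

theorem aux_ladd (f g : C →ₗ[F] C ⊗[F] C) (α : C →ₗ[F] C) :
    lT α (f + g) = lT α f + lT α g := by
  simp [lT, TensorProduct.map_add_right]

theorem aux_lneg (f : C →ₗ[F] C ⊗[F] C) (α : C →ₗ[F] C) :
    lT α (-f) = - lT α f := by
  have := aux_ladd f (-f) α
  rw [add_neg_cancel] at this
  have h0 : lT α (0 : C →ₗ[F] C ⊗[F] C) = 0 := by simp [lT]
  rw [h0] at this
  exact (neg_eq_of_add_eq_zero_right this.symm).symm

/-- For a post-Hom-Lie coalgebra `(C, γ, Δ, α)`, the comultiplication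
`Δ̃ = Δ + (1/2)γ` is Hom-Lie admissible: its cocommutator
`γ̃ = (1 - τ) ∘ Δ̃` satisfies the Hom-co-Jacobi identity. -/
theorem postHomLieCoalgebra_homLieAdmissible
    (γ Δ : C →ₗ[F] C ⊗[F] C) (α : C →ₗ[F] C)
    (h : IsPostHomLieCoalgebra γ Δ α) :
    (LinearMap.id + cyc + cyc ∘ₗ cyc) ∘ₗ
      (lT α ((Δ + (1/2 : F) • γ) - tw ∘ₗ (Δ + (1/2 : F) • γ)) ∘ₗ
        ((Δ + (1/2 : F) • γ) - tw ∘ₗ (Δ + (1/2 : F) • γ))) = 0 := by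
  obtain ⟨⟨hs, -, hJ⟩, h1, h2⟩ := h
  have hg : (Δ + (1/2 : F) • γ) - tw ∘ₗ (Δ + (1/2 : F) • γ) = Δ + -(tw ∘ₗ Δ) + γ := by
    have : tw ∘ₗ γ = -γ := by rw [eq_neg_iff_add_eq_zero, add_comm]; exact eq_neg_iff_add_eq_zero.mp hs
    rw [LinearMap.comp_add, LinearMap.comp_smul, this]
    module
  rw [hg]
  ext1 x
  have hJ := LinearMap.congr_fun hJ x
  have h1 := LinearMap.congr_fun h1 x
  have h2 := LinearMap.congr_fun h2 x
  have hsx : γ x = - tw (γ x) := LinearMap.congr_fun hs x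
  have hG : lT α Δ (γ x) = - cyc (cyc (rT Δ α (γ x))) := by
    rw [← aux_lflip, ← map_neg, ← hsx]
  have hH : rT Δ α (γ x) = - cyc (lT α Δ (γ x)) := by
    rw [hG, map_neg, aux_ccc, neg_neg]
  simp only [LinearMap.comp_apply, LinearMap.add_apply, LinearMap.sub_apply, LinearMap.id_apply,
    LinearMap.zero_apply] at hJ h1 h2
  rw [hH] at h1
  have h1c := congrArg cyc h1
  have h1cc := congrArg cyc h1c
  have h2c := congrArg cyc h2
  have h2cc := congrArg cyc h2c
  simp only [aux_ladd, aux_lneg, LinearMap.comp_apply, LinearMap.add_apply, LinearMap.neg_apply,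
    LinearMap.id_apply, LinearMap.zero_apply, map_add, map_neg, map_sub, map_zero, aux_ltw,
    aux_lflip, aux_rtw, aux_ccc] at hJ h1 h1c h1cc h2 h2c h2cc ⊢
  linear_combination (norm := module) hJ + h1 + h1c + h1cc - h2 - h2c - h2cc
end
end

section
/- Let (M, Δ_⋄, Δ_•, α_M) be a comodule over a multiplicative post-Hom-Lie coalgebra (L, γ, Δ, α) over a field of characteristic 0. For any natural number k define Δ_⋄⁽⁰ᐟᵏ⁾ = Δ_⋄∘α_M^{2^k−1} : M → L⊗M and Δ_•⁽⁰ᐟᵏ⁾ = Δ_•∘α_M^{2^k−1} : M → L⊗M. Then (M, Δ_⋄⁽⁰ᐟᵏ⁾, Δ_•⁽⁰ᐟᵏ⁾, α_M^{2^k}) is a comodule over the twisted post-Hom-Lie coalgebra (L, γ∘α^{2^k−1}, Δ∘α^{2^k−1}, α^{2^k}). -/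
open TensorProduct

noncomputable section

variable {F : Type*} [Field F] [CharZero F]
variable {C : Type*} [AddCommGroup C] [Module F C]

variable {M : Type*} [AddCommGroup M] [Module F M]

/-- Comodule axioms over a post-Hom-Lie coalgebra `(C, γ, Δ, α)`, with structure
maps `Dd = Δ_⋄` and `Db = Δ_•`. -/
def IsPostHomLieComodule (γ Δ : C →ₗ[F] C ⊗[F] C) (α : C →ₗ[F] C)
    (Dd Db : M →ₗ[F] C ⊗[F] M) (αM : M →ₗ[F] M) : Prop :=
  (Dd ∘ₗ αM = TensorProduct.map α αM ∘ₗ Dd) ∧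
  (Db ∘ₗ αM = TensorProduct.map α αM ∘ₗ Db) ∧
  (rTM γ αM ∘ₗ Dd = lTM α Dd ∘ₗ Dd - sw12M ∘ₗ (lTM α Dd ∘ₗ Dd)) ∧
  (rTM Δ αM ∘ₗ Dd = lTM α Dd ∘ₗ Db - sw12M ∘ₗ (lTM α Db ∘ₗ Db)) ∧
  (rTM γ αM ∘ₗ Db =
    (lTM α Db ∘ₗ Db - sw12M ∘ₗ (lTM α Db ∘ₗ Db)) +
    (sw12M ∘ₗ (rTM Δ αM ∘ₗ Db) - rTM Δ αM ∘ₗ Db))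

theorem aux_pow (α : C →ₗ[F] C) (D : M →ₗ[F] C ⊗[F] M) (αM : M →ₗ[F] M)
    (h : D ∘ₗ αM = TensorProduct.map α αM ∘ₗ D) (n : ℕ) :
    TensorProduct.map (α ^ n) (αM ^ n) ∘ₗ D = D ∘ₗ αM ^ n := by
  induction n with
  | zero => simp [Module.End.one_eq_id]
  | succ n ih =>
    rw [pow_succ, pow_succ, Module.End.mul_eq_comp, Module.End.mul_eq_comp,
      TensorProduct.map_comp, LinearMap.comp_assoc, ← h, ← LinearMap.comp_assoc, ih,
      LinearMap.comp_assoc, ← Module.End.mul_eq_comp]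

theorem aux_r (α : C →ₗ[F] C) (D : M →ₗ[F] C ⊗[F] M) (αM : M →ₗ[F] M)
    (h : D ∘ₗ αM = TensorProduct.map α αM ∘ₗ D) (n : ℕ) (f : C →ₗ[F] C ⊗[F] C) :
    rTM (f ∘ₗ α ^ n) (αM ^ (n + 1)) ∘ₗ (D ∘ₗ αM ^ n) =
      (rTM f αM ∘ₗ D) ∘ₗ ((αM ^ n) ∘ₗ (αM ^ n)) := by
  rw [pow_succ', Module.End.mul_eq_comp, rTM, TensorProduct.map_comp]
  have := aux_pow α D αM h n
  calc _ = rTM f αM ∘ₗ (TensorProduct.map (α ^ n) (αM ^ n) ∘ₗ D) ∘ₗ αM ^ n := rfl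
    _ = _ := by rw [this]; rfl

theorem aux_l (α : C →ₗ[F] C) (D : M →ₗ[F] C ⊗[F] M) (αM : M →ₗ[F] M)
    (h : D ∘ₗ αM = TensorProduct.map α αM ∘ₗ D) (n : ℕ) (f : M →ₗ[F] C ⊗[F] M) :
    lTM (α ^ (n + 1)) (f ∘ₗ αM ^ n) ∘ₗ (D ∘ₗ αM ^ n) =
      (lTM α f ∘ₗ D) ∘ₗ ((αM ^ n) ∘ₗ (αM ^ n)) := by
  rw [pow_succ', Module.End.mul_eq_comp, lTM, TensorProduct.map_comp]
  have := aux_pow α D αM h n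
  calc _ = lTM α f ∘ₗ (TensorProduct.map (α ^ n) (αM ^ n) ∘ₗ D) ∘ₗ αM ^ n := rfl
    _ = _ := by rw [this]; rfl

/-- Twisting a comodule over a multiplicative post-Hom-Lie coalgebra by
`α_M^(2^k - 1)` yields a comodule over the twisted post-Hom-Lie coalgebra
`(L, γ ∘ α^(2^k-1), Δ ∘ α^(2^k-1), α^(2^k))`. -/
theorem postHomLieComodule_twist_exp
    (γ Δ : C →ₗ[F] C ⊗[F] C) (α : C →ₗ[F] C)
    (Dd Db : M →ₗ[F] C ⊗[F] M) (αM : M →ₗ[F] M)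
    (h : IsPostHomLieCoalgebra γ Δ α)
    (hmult : Δ ∘ₗ α = TensorProduct.map α α ∘ₗ Δ)
    (hM : IsPostHomLieComodule γ Δ α Dd Db αM) (k : ℕ) :
    IsPostHomLieComodule (γ ∘ₗ α ^ (2 ^ k - 1)) (Δ ∘ₗ α ^ (2 ^ k - 1)) (α ^ (2 ^ k))
      (Dd ∘ₗ αM ^ (2 ^ k - 1)) (Db ∘ₗ αM ^ (2 ^ k - 1)) (αM ^ (2 ^ k)) := by
  obtain ⟨n, hn⟩ : ∃ n, 2 ^ k = n + 1 := Nat.exists_eq_succ_of_ne_zero (by positivity)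
  rw [hn, Nat.add_sub_cancel]
  obtain ⟨h1, h2, h3, h4, h5⟩ := hM
  refine ⟨?_, ?_, ?_, ?_, ?_⟩
  · rw [← LinearMap.comp_assoc, aux_pow α Dd αM h1, LinearMap.comp_assoc, LinearMap.comp_assoc,
      ← Module.End.mul_eq_comp, ← Module.End.mul_eq_comp, ← pow_add, ← pow_add, add_comm]
  · rw [← LinearMap.comp_assoc, aux_pow α Db αM h2, LinearMap.comp_assoc, LinearMap.comp_assoc,
      ← Module.End.mul_eq_comp, ← Module.End.mul_eq_comp, ← pow_add, ← pow_add, add_comm]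
  · rw [aux_r α Dd αM h1, aux_l α Dd αM h1, h3]; rfl
  · rw [aux_r α Dd αM h1, aux_l α Db αM h2, aux_l α Db αM h2, h4]; rfl
  · rw [aux_r α Db αM h2, aux_r α Db αM h2, aux_l α Db αM h2, h5]; rfl
end
end
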